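/- Let (X,d) be a compact metric space, containing at least two points, in which any two points can be joined by an L-Lipschitz path γ : [0,1] → X for some uniform constant L > 0, and let G_1 = {g_1,…,g_m} be a finite set of continuous self-maps of X such that each g_i is a surjective open map and there are common constants δ_0 > 0 and 0 < λ < 1 with d(g_i(x), g_i(y)) ≥ λ^{-1} d(x,y) whenever d(x,y) ≤ δ_0. Then: (a) the generated semigroup action satisfies the periodic strong orbital specification property, i.e. the shadowing point x in the strong orbital specification property can be chosen to be a fixed point of the total concatenation \underline{g}_{h_{k}} ∘ \underline{g}_{w_k} ∘ … ∘ \underline{g}_{h_1} ∘ \underline{g}_{w_1} (with a connecting word h_k of any prescribed length ≥ p(ε) appended after the last block); (b) the set of periodic points ⋃_{n≥1} ⋃_{w of length n} Fix(\underline{g}_w) is dense in X; and (c) 0 < h_top((G,G_1),X) ≤ limsup_{n→∞} (1/n) log( m^{-n} Σ_{w of length n} #Fix(\underline{g}_w) ), where Fix(g) = {x ∈ X : g(x) = x}. -/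

import Mathlib

/-!
The argument rests on inverse branches. An open expanding map of a compact space has
`lam`-contracting inverse branches on balls of a uniform radius (`exists_pull`), and these compose
along words (`pull_word`). Lifting subdivided Lipschitz paths through them shows that `g_w` maps
every closed ball of radius a fixed multiple of `lam ^ |w|` onto `X` (`exists_far_pull`), with the same
constant for all words.

For specification, a target point is pulled back through the blocks from last to first, a long
connecting word allowing an arbitrary jump at a small cost (`spec_endpoint`). If the target is the
first point of the specification, the resulting orbit is almost closed, and the closing lemma
(`closing`) replaces it by a nearby periodic one. Density of periodic points is the case of one
empty block.

For the entropy bound, shadowing a `(w, n, ε)`-separated set by fixed points of `g_{hw}`, with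
`|h| = p(ε / 2)`, is injective, so `bufZ n ε` is at most the average number of fixed points over
words of length `p + n` (`sep_card_le`); shifting the index by `p` does not change the exponential
growth rate (`limsup_growth_le`). By expansivity fixed points are determined by their itineraries
in a finite cover (`exists_card_fix_le`), which keeps all growth rates finite. Positivity holds
because specification lets an orbit choose freely between two points once every `p` steps, giving
`2 ^ k` separated points for each word of length `k p` (`exists_sep`).
-/

open Filter MeasureTheory Topology
open scoped Classical

/-- Composition of the generators along a word `w = [i_n, …, i_1]` (rightmost letter applied
first): `wcomp g w = g i_n ∘ … ∘ g i_1`.  The partial compositions `g_{w,ℓ}` are obtained as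
`wcomp g s` for the suffixes `s <:+ w`. -/
def wcomp {m : ℕ} {X : Type*} (g : Fin m → X → X) : List (Fin m) → X → X
  | [] => id
  | i :: w => g i ∘ wcomp g w

/-- The dynamical distance `d_w(x,y) = max_{0 ≤ ℓ ≤ n} d(g_{w,ℓ} x, g_{w,ℓ} y)`, the partial
compositions `g_{w,ℓ}` being the compositions along the suffixes of `w`. -/
noncomputable def dynDist {m : ℕ} {X : Type*} [MetricSpace X] (g : Fin m → X → X)
    (w : List (Fin m)) (x y : X) : ℝ :=
  ((w.tails).map fun s => dist (wcomp g s x) (wcomp g s y)).foldr max 0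

/-- The concatenation `h_j ++ w_j ++ … ++ h_1 ++ w_1` of the first `j` blocks, so that
`wcomp g (precomp w h j) = g_{h_j} ∘ g_{w_j} ∘ … ∘ g_{h_1} ∘ g_{w_1}`. -/
def precomp {m : ℕ} (w h : ℕ → List (Fin m)) : ℕ → List (Fin m)
  | 0 => []
  | j + 1 => h j ++ w j ++ precomp w h j

/-- Maximal cardinality of a `(w,n,ε)`-separated subset of `E` (separation meaning
`d_w(x,y) > ε` for distinct points). -/
noncomputable def maxSep {m : ℕ} {X : Type*} [MetricSpace X] (g : Fin m → X → X)
    (w : List (Fin m)) (ε : ℝ) (E : Set X) : ℕ :=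
  sSup {k : ℕ | ∃ F : Finset X, ↑F ⊆ E ∧
    (∀ x ∈ F, ∀ y ∈ F, x ≠ y → ε < dynDist g w x y) ∧ F.card = k}

/-- The averaged sum `Z_n((G,G₁),E,ε) = m^{-n} ∑_{|w|=n} s(w,n,E,ε)`. -/
noncomputable def bufZ {m : ℕ} {X : Type*} [MetricSpace X] (g : Fin m → X → X)
    (n : ℕ) (ε : ℝ) (E : Set X) : ℝ :=
  (1 / (m : ℝ) ^ n) * ∑ f : Fin n → Fin m, (maxSep g (List.ofFn f) ε E : ℝ)

/-- Averaged (Bufetov) topological entropy of the semigroup action on `E`: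
`lim_{ε→0} limsup_n (1/n) log Z_n`; by monotonicity in `ε` the limit as `ε → 0` is the
supremum over `ε > 0`. -/
noncomputable def bufEntropy {m : ℕ} {X : Type*} [MetricSpace X] (g : Fin m → X → X)
    (E : Set X) : ℝ :=
  ⨆ ε : {ε : ℝ // 0 < ε}, limsup (fun n : ℕ => Real.log (bufZ g n ε.1 E) / n) atTop

lemma wcomp_append {m : ℕ} {X : Type*} (g : Fin m → X → X) (u v : List (Fin m)) (x : X) :
    wcomp g (u ++ v) x = wcomp g u (wcomp g v x) := by
  induction u with
  | nil => rfl
  | cons i u ih => simp only [List.cons_append, wcomp, Function.comp, ih]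

lemma continuous_wcomp {m : ℕ} {X : Type*} [MetricSpace X] {g : Fin m → X → X}
    (hg : ∀ i, Continuous (g i)) (w : List (Fin m)) : Continuous (wcomp g w) := by
  induction w with
  | nil => exact continuous_id
  | cons i w ih => exact (hg i).comp ih

lemma lt_foldr_max_iff {ε : ℝ} (hε : 0 ≤ ε) (l : List ℝ) :
    ε < l.foldr max 0 ↔ ∃ a ∈ l, ε < a := by
  induction l with
  | nil => simp [hε]
  | cons a l ih => simp [ih]

lemma lt_dynDist_iff {m : ℕ} {X : Type*} [MetricSpace X] (g : Fin m → X → X)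
    (w : List (Fin m)) (x y : X) {ε : ℝ} (hε : 0 ≤ ε) :
    ε < dynDist g w x y ↔ ∃ s, s <:+ w ∧ ε < dist (wcomp g s x) (wcomp g s y) := by
  unfold dynDist
  rw [lt_foldr_max_iff hε]
  simp

lemma suffix_precomp {m : ℕ} (w h : ℕ → List (Fin m)) {k j : ℕ} (hj : j < k)
    {s : List (Fin m)} (hs : s <:+ w j) : s ++ precomp w h j <:+ precomp w h k := by
  induction k with
  | zero => omega
  | succ k ih =>
    rcases Nat.lt_succ_iff_lt_or_eq.1 hj with hj | rfl
    · exact (ih hj).trans (List.suffix_append _ _)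
    · obtain ⟨t, ht⟩ := hs
      exact ⟨h j ++ t, by simp [precomp, ← ht]⟩

/-! ### Inverse branches -/

/-- An open continuous self-map of a compact space is uniformly open, so an expanding one has
`lam`-contracting inverse branches on all balls of one common radius `ρ`. -/
lemma exists_pull_one {X : Type*} [MetricSpace X] [CompactSpace X] {f : X → X}
    (hf : Continuous f) (hopen : IsOpenMap f) {δ₀ lam : ℝ} (hδ₀ : 0 < δ₀) (hlam0 : 0 < lam)
    (hexp : ∀ x y : X, dist x y ≤ δ₀ → lam⁻¹ * dist x y ≤ dist (f x) (f y)) :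
    ∃ ρ > 0, ∀ x z, dist (f x) z ≤ ρ → ∃ y, f y = z ∧ dist x y ≤ lam * dist (f x) z := by
  have hloc : ∀ x : X, ∃ r > 0, Metric.ball (f x) (2 * r) ⊆ f '' Metric.ball x (δ₀ / 2) := by
    intro x
    have h1 : f '' Metric.ball x (δ₀ / 2) ∈ 𝓝 (f x) :=
      hopen.image_mem_nhds (Metric.ball_mem_nhds x (by positivity))
    obtain ⟨r, hr, hrs⟩ := Metric.mem_nhds_iff.1 h1
    exact ⟨r / 2, by positivity, by rwa [mul_div_cancel₀ r two_ne_zero]⟩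
  choose r hr hrs using hloc
  obtain ⟨t, -, ht⟩ := isCompact_univ.elim_nhds_subcover
    (fun x => Metric.ball x (δ₀ / 2) ∩ f ⁻¹' Metric.ball (f x) (r x))
    (fun x _ => inter_mem (Metric.ball_mem_nhds x (by positivity))
      (hf.continuousAt (Metric.ball_mem_nhds _ (hr x))))
  obtain ⟨ρ, hρ, hρt⟩ : ∃ ρ > 0, ∀ c ∈ t, ρ < r c := by
    clear ht
    induction t using Finset.induction_on with
    | empty => exact ⟨1, one_pos, by simp⟩
    | insert c t _ ih =>
      obtain ⟨ρ, hρ, h⟩ := ih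
      refine ⟨min ρ (r c / 2), lt_min hρ (half_pos (hr c)), ?_⟩
      intro d hd
      rcases Finset.mem_insert.1 hd with rfl | hd
      · exact (min_le_right _ _).trans_lt (half_lt_self (hr d))
      · exact (min_le_left _ _).trans_lt (h d hd)
  refine ⟨ρ, hρ, fun x z hz => ?_⟩
  obtain ⟨c, hct, hxc⟩ : ∃ c ∈ t, x ∈ Metric.ball c (δ₀ / 2) ∩
      f ⁻¹' Metric.ball (f c) (r c) := by
    simpa only [Set.mem_iUnion₂, exists_prop] using ht (Set.mem_univ x)
  have h1 : dist x c < δ₀ / 2 := hxc.1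
  have h2 : dist (f x) (f c) < r c := hxc.2
  have h3 : z ∈ Metric.ball (f c) (2 * r c) := by
    have := dist_triangle z (f x) (f c)
    rw [dist_comm z (f x)] at this
    have := hρt c hct
    rw [Metric.mem_ball]
    linarith
  obtain ⟨y, hy, rfl⟩ := hrs c h3
  refine ⟨y, rfl, ?_⟩
  have h4 : dist x y ≤ δ₀ := by
    have := dist_triangle_right x y c
    have : dist y c < δ₀ / 2 := hy
    linarith
  have h5 := hexp x y h4
  rwa [inv_mul_le_iff₀ hlam0] at h5

lemma exists_pull {m : ℕ} {X : Type*} [MetricSpace X] [CompactSpace X] {g : Fin m → X → X}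
    (hg : ∀ i, Continuous (g i)) (hopen : ∀ i, IsOpenMap (g i)) {δ₀ lam : ℝ} (hδ₀ : 0 < δ₀)
    (hlam0 : 0 < lam)
    (hexp : ∀ i, ∀ x y : X, dist x y ≤ δ₀ → lam⁻¹ * dist x y ≤ dist (g i x) (g i y)) :
    ∃ ρ > 0, ∀ i x z, dist (g i x) z ≤ ρ →
      ∃ y, g i y = z ∧ dist x y ≤ lam * dist (g i x) z := by
  choose r hr h using fun i => exists_pull_one (hg i) (hopen i) hδ₀ hlam0 (hexp i)
  rcases isEmpty_or_nonempty (Fin m) with hm | hm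
  · exact ⟨1, one_pos, fun i => hm.elim i⟩
  · obtain ⟨i₀, hi₀⟩ := Finite.exists_min r
    exact ⟨r i₀, hr i₀, fun i x z hz => h i x z (hz.trans (hi₀ i))⟩

/-- The inverse branch along a word contracts at the rate `lam ^ |w|`, and its orbit never
leaves the `dist (g_w x) z`-neighbourhood of the orbit of `x`. -/
lemma pull_word {m : ℕ} {X : Type*} [MetricSpace X] {g : Fin m → X → X} {lam ρ : ℝ}
    (hlam0 : 0 < lam) (hlam1 : lam < 1)
    (hpull : ∀ i x z, dist (g i x) z ≤ ρ → ∃ y, g i y = z ∧ dist x y ≤ lam * dist (g i x) z)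
    (w : List (Fin m)) (x z : X) (hz : dist (wcomp g w x) z ≤ ρ) :
    ∃ y, wcomp g w y = z ∧ dist x y ≤ lam ^ w.length * dist (wcomp g w x) z ∧
      ∀ s, s <:+ w → dist (wcomp g s x) (wcomp g s y) ≤ dist (wcomp g w x) z := by
  induction w generalizing z with
  | nil =>
    refine ⟨z, rfl, by simp [wcomp], ?_⟩
    intro s hs
    rw [List.suffix_nil.1 hs]
    exact le_rfl
  | cons i w ih =>
    obtain ⟨z', hz', hd⟩ := hpull i (wcomp g w x) z hz
    change dist (g i (wcomp g w x)) z ≤ ρ at hz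
    have hd' : dist (wcomp g w x) z' ≤ dist (g i (wcomp g w x)) z :=
      hd.trans (mul_le_of_le_one_left dist_nonneg hlam1.le)
    obtain ⟨y, hy, hxy, hs⟩ := ih z' (hd'.trans hz)
    have hyz : wcomp g (i :: w) y = z := by simp [wcomp, hy, hz']
    refine ⟨y, hyz, ?_, ?_⟩
    · refine hxy.trans ?_
      rw [List.length_cons, pow_succ, mul_assoc]
      exact mul_le_mul_of_nonneg_left hd (by positivity)
    · intro s hsw
      rcases List.suffix_cons_iff.1 hsw with rfl | hsw
      · rw [hyz]
      · exact (hs s hsw).trans hd'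

/-- Path lifting: lifting a subdivided Lipschitz path through the inverse branches, every `z`
has a `g_w`-preimage within `C * lam ^ |w|` of any given point. In particular all sufficiently
long words map every ball of a given radius onto the whole space. -/
lemma exists_far_pull {m : ℕ} {X : Type*} [MetricSpace X] {g : Fin m → X → X} {lam ρ L : ℝ}
    (hL : 0 < L)
    (hpath : ∀ x y : X, ∃ γ : ℝ → X, LipschitzOnWith (Real.toNNReal L) γ (Set.Icc 0 1) ∧
      γ 0 = x ∧ γ 1 = y)
    (hlam0 : 0 < lam) (hlam1 : lam < 1) (hρ : 0 < ρ)
    (hpull : ∀ i x z, dist (g i x) z ≤ ρ → ∃ y, g i y = z ∧ dist x y ≤ lam * dist (g i x) z) :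
    ∃ C : ℝ, ∀ (w : List (Fin m)) (x z : X),
      ∃ y, wcomp g w y = z ∧ dist x y ≤ lam ^ w.length * C := by
  obtain ⟨M, hM⟩ := exists_nat_gt (L / ρ)
  have hM0 : (0 : ℝ) < M := (div_pos hL hρ).trans hM
  have hLM : L / M ≤ ρ := by
    rw [div_lt_iff₀ hρ] at hM
    rw [div_le_iff₀ hM0]
    linarith
  refine ⟨M * ρ, fun w x z => ?_⟩
  obtain ⟨γ, hγ, h0, h1⟩ := hpath (wcomp g w x) z
  have key : ∀ j : ℕ, j ≤ M → ∃ y, wcomp g w y = γ (j / M) ∧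
      dist x y ≤ lam ^ w.length * (j * ρ) := by
    intro j
    induction j with
    | zero => intro _; exact ⟨x, by simp [h0], by simp⟩
    | succ j ih =>
      intro hj
      obtain ⟨y, hy, hxy⟩ := ih (by omega)
      have hjM : (j : ℝ) + 1 ≤ M := by exact_mod_cast hj
      have hd : dist (wcomp g w y) (γ ((j + 1 : ℕ) / M)) ≤ ρ := by
        rw [hy]
        refine (hγ.dist_le_mul _ ⟨by positivity, ?_⟩ _ ⟨by positivity, ?_⟩).trans ?_
        · rw [div_le_one hM0]; linarith
        · rw [div_le_one hM0]; push_cast; exact hjM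
        · rw [Real.coe_toNNReal L hL.le, Real.dist_eq, ← sub_div, abs_div, abs_of_pos hM0]
          push_cast
          rw [show (j : ℝ) - (j + 1) = -1 by ring, abs_neg, abs_one, mul_one_div]
          exact hLM
      obtain ⟨y', hy', hd', -⟩ := pull_word hlam0 hlam1 hpull w y _ hd
      refine ⟨y', hy', (dist_triangle x y y').trans ?_⟩
      have := hd'.trans (mul_le_mul_of_nonneg_left hd (by positivity))
      push_cast
      linarith
  obtain ⟨y, hy, hd⟩ := key M le_rfl
  exact ⟨y, by rw [hy, div_self hM0.ne', h1], hd⟩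

/-! ### Closing lemma and periodic specification -/

/-- Closing lemma: iterating the inverse branch of `g_w` that follows the almost closed orbit of
`y` gives a geometrically convergent sequence of backward iterates, whose limit is fixed. -/
lemma closing {m : ℕ} {X : Type*} [MetricSpace X] [CompactSpace X] {g : Fin m → X → X}
    {lam ρ : ℝ} (hg : ∀ i, Continuous (g i)) (hlam0 : 0 < lam) (hlam1 : lam < 1)
    (hpull : ∀ i x z, dist (g i x) z ≤ ρ → ∃ y, g i y = z ∧ dist x y ≤ lam * dist (g i x) z)
    (w : List (Fin m)) (hw : w ≠ []) (y : X) {a : ℝ} (ha : a ≤ ρ)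
    (hy : dist (wcomp g w y) y ≤ a) :
    ∃ q, wcomp g w q = q ∧
      ∀ s, s <:+ w → dist (wcomp g s y) (wcomp g s q) ≤ a / (1 - lam) := by
  choose! P hP using pull_word hlam0 hlam1 hpull w
  have ha0 : 0 ≤ a := dist_nonneg.trans hy
  have hlen : lam ^ w.length ≤ lam :=
    pow_le_of_le_one hlam0.le hlam1.le (by simpa using hw)
  -- The new point `P c c` is a preimage of the current point `c` lying near `c`.
  let Y : ℕ → X := fun n => (fun c => P c c)^[n] y
  have hY : ∀ n, Y (n + 1) = P (Y n) (Y n) := fun n => Function.iterate_succ_apply' _ n y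
  have hsmall : ∀ n, dist (wcomp g w (Y n)) (Y n) ≤ a * lam ^ n := by
    intro n
    induction n with
    | zero => simpa [Y] using hy
    | succ n ih =>
      have hle : a * lam ^ n ≤ ρ :=
        (mul_le_of_le_one_right ha0 (pow_le_one₀ hlam0.le hlam1.le)).trans ha
      obtain ⟨h1, h2, -⟩ := hP (Y n) (Y n) (ih.trans hle)
      rw [hY, h1]
      calc dist (Y n) (P (Y n) (Y n)) ≤ lam ^ w.length * dist (wcomp g w (Y n)) (Y n) := h2
        _ ≤ lam * (a * lam ^ n) := mul_le_mul hlen ih dist_nonneg hlam0.le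
        _ = a * lam ^ (n + 1) := by ring
  have hle : ∀ n, a * lam ^ n ≤ ρ := fun n =>
    (mul_le_of_le_one_right ha0 (pow_le_one₀ hlam0.le hlam1.le)).trans ha
  have hstep : ∀ s, s <:+ w → ∀ n, dist (wcomp g s (Y n)) (wcomp g s (Y (n + 1))) ≤
      a * lam ^ n := by
    intro s hs n
    rw [hY]
    exact ((hP (Y n) (Y n) ((hsmall n).trans (hle n))).2.2 s hs).trans (hsmall n)
  obtain ⟨q, hq⟩ := cauchySeq_tendsto_of_complete
    (cauchySeq_of_le_geometric lam a hlam1 (hstep [] (List.nil_suffix)))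
  have hq' : Tendsto Y atTop (𝓝 q) := hq
  refine ⟨q, ?_, ?_⟩
  · have h1 : Tendsto (fun n => wcomp g w (Y (n + 1))) atTop (𝓝 (wcomp g w q)) :=
      ((continuous_wcomp hg w).tendsto q).comp (hq'.comp (tendsto_add_atTop_nat 1))
    have h2 : (fun n => wcomp g w (Y (n + 1))) = Y := by
      funext n
      rw [hY]
      exact (hP (Y n) (Y n) ((hsmall n).trans (hle n))).1
    rw [h2] at h1
    exact tendsto_nhds_unique h1 hq'
  · intro s hs
    exact dist_le_of_le_geometric_of_tendsto₀ lam a hlam1 (hstep s hs)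
      (((continuous_wcomp hg s).tendsto q).comp hq')

/-- Specification with a prescribed endpoint `z`, obtained by pulling `z` back block by block,
starting from the last one. -/
lemma spec_endpoint {m : ℕ} {X : Type*} [MetricSpace X] {g : Fin m → X → X}
    {lam ρ C η : ℝ} {p : ℕ} (hlam0 : 0 < lam) (hlam1 : lam < 1)
    (hpull : ∀ i x z, dist (g i x) z ≤ ρ → ∃ y, g i y = z ∧ dist x y ≤ lam * dist (g i x) z)
    (hfar : ∀ (w : List (Fin m)) (x z : X),
      ∃ y, wcomp g w y = z ∧ dist x y ≤ lam ^ w.length * C)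
    (hηρ : η ≤ ρ) (hp : ∀ n, p ≤ n → lam ^ n * C ≤ η)
    (k : ℕ) (x : ℕ → X) (w h : ℕ → List (Fin m)) (hh : ∀ j < k, p ≤ (h j).length) (z : X) :
    ∃ y, wcomp g (precomp w h k) y = z ∧ ∀ j < k, ∀ s, s <:+ w j →
      dist (wcomp g s (x j)) (wcomp g s (wcomp g (precomp w h j) y)) ≤ η := by
  induction k generalizing z with
  | zero => exact ⟨z, rfl, by simp⟩
  | succ k ih =>
    obtain ⟨u, hu, hdu⟩ := hfar (h k) (wcomp g (w k) (x k)) z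
    have hdu' := hdu.trans (hp _ (hh k (by omega)))
    obtain ⟨v, hv, -, hs⟩ := pull_word hlam0 hlam1 hpull (w k) (x k) u (hdu'.trans hηρ)
    obtain ⟨y, hy, hyj⟩ := ih (fun j hj => hh j (by omega)) v
    refine ⟨y, ?_, ?_⟩
    · simp only [precomp, wcomp_append, hy, hv, hu]
    · intro j hj s hsj
      rcases Nat.lt_succ_iff_lt_or_eq.1 hj with hj | rfl
      · exact hyj j hj s hsj
      · rw [hy]
        exact (hs s hsj).trans hdu'

lemma periodic_spec {m : ℕ} {X : Type*} [MetricSpace X] [CompactSpace X] [Nonempty X]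
    {g : Fin m → X → X} {lam ρ C : ℝ} (hg : ∀ i, Continuous (g i))
    (hlam0 : 0 < lam) (hlam1 : lam < 1) (hρ : 0 < ρ)
    (hpull : ∀ i x z, dist (g i x) z ≤ ρ → ∃ y, g i y = z ∧ dist x y ≤ lam * dist (g i x) z)
    (hfar : ∀ (w : List (Fin m)) (x z : X),
      ∃ y, wcomp g w y = z ∧ dist x y ≤ lam ^ w.length * C)
    (ε : ℝ) (hε : 0 < ε) :
    ∃ p : ℕ, 0 < p ∧ ∀ (k : ℕ) (x : ℕ → X) (w h : ℕ → List (Fin m)),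
      (∀ j < k, p ≤ (h j).length) →
      ∃ y : X, wcomp g (precomp w h k) y = y ∧
        ∀ j < k, ∀ s, s <:+ w j →
          dist (wcomp g s (wcomp g (precomp w h j) y)) (wcomp g s (x j)) < ε := by
  have h1 : 0 < 1 - lam := by linarith
  -- A total error of `η + η / (1 - lam)` is made by shadowing and then closing.
  set η := min ρ (ε * (1 - lam) / 4) with hη
  have hη0 : 0 < η := lt_min hρ (by positivity)
  have hηε : η / (1 - lam) ≤ ε / 4 := by
    rw [div_le_iff₀ h1]
    have := min_le_right ρ (ε * (1 - lam) / 4)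
    linarith
  have hηε' : η ≤ ε / 4 := by
    have := min_le_right ρ (ε * (1 - lam) / 4)
    nlinarith
  have hlim : Tendsto (fun n : ℕ => lam ^ n * C) atTop (𝓝 0) := by
    simpa using (tendsto_pow_atTop_nhds_zero_of_lt_one hlam0.le hlam1).mul_const C
  obtain ⟨p, hp⟩ := eventually_atTop.1 (hlim.eventually (ge_mem_nhds hη0))
  refine ⟨p + 1, by omega, fun k x w h hh => ?_⟩
  rcases Nat.eq_zero_or_pos k with rfl | hk
  · exact ⟨Classical.arbitrary X, rfl, by simp⟩
  obtain ⟨y, hy, hyj⟩ := spec_endpoint hlam0 hlam1 hpull hfar (min_le_left _ _)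
    (fun n hn => hp n hn) k x w h (fun j hj => (Nat.le_succ p).trans (hh j hj)) (x 0)
  have hne : precomp w h k ≠ [] := by
    obtain ⟨k, rfl⟩ := Nat.exists_eq_succ_of_ne_zero hk.ne'
    have := hh k (by omega)
    intro h0
    simp only [precomp, List.append_eq_nil_iff] at h0
    simp [h0.1] at this
  have hy0 : dist (wcomp g (precomp w h k) y) y ≤ η := by
    rw [hy]
    exact hyj 0 hk [] List.nil_suffix
  obtain ⟨q, hq, hqs⟩ := closing hg hlam0 hlam1 hpull _ hne y (min_le_left _ _) hy0
  refine ⟨q, hq, fun j hj s hs => ?_⟩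
  have e1 := hqs _ (suffix_precomp w h hj hs)
  rw [wcomp_append, wcomp_append, dist_comm] at e1
  have e2 := hyj j hj s hs
  rw [dist_comm] at e2
  have := dist_triangle (wcomp g s (wcomp g (precomp w h j) q))
    (wcomp g s (wcomp g (precomp w h j) y)) (wcomp g s (x j))
  linarith

/-! ### Counting fixed points -/

lemma expansive {m : ℕ} {X : Type*} [MetricSpace X] {g : Fin m → X → X} {lam δ₀ : ℝ}
    (hlam0 : 0 < lam)
    (hexp : ∀ i, ∀ x y : X, dist x y ≤ δ₀ → lam⁻¹ * dist x y ≤ dist (g i x) (g i y))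
    (w : List (Fin m)) (x y : X)
    (hs : ∀ s, s <:+ w → dist (wcomp g s x) (wcomp g s y) ≤ δ₀) :
    dist x y ≤ lam ^ w.length * dist (wcomp g w x) (wcomp g w y) := by
  induction w with
  | nil => simp [wcomp]
  | cons i w ih =>
    have h1 := ih fun s h => hs s (h.trans (List.suffix_cons i w))
    have h2 := hexp i _ _ (hs w (List.suffix_cons i w))
    rw [inv_mul_le_iff₀ hlam0] at h2
    rw [List.length_cons, pow_succ, mul_assoc]
    exact h1.trans (mul_le_mul_of_nonneg_left h2 (by positivity))

/-- Fixed points of `g_w` are determined by their itinerary with respect to a finite cover by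
balls of radius `δ₀ / 2`, so their number grows at most exponentially in `|w|`. -/
lemma exists_card_fix_le {m : ℕ} {X : Type*} [MetricSpace X] [CompactSpace X] [Nonempty X]
    {g : Fin m → X → X} {lam δ₀ : ℝ} (hδ₀ : 0 < δ₀) (hlam0 : 0 < lam) (hlam1 : lam < 1)
    (hexp : ∀ i, ∀ x y : X, dist x y ≤ δ₀ → lam⁻¹ * dist x y ≤ dist (g i x) (g i y)) :
    ∃ M : ℕ, 0 < M ∧ ∀ w : List (Fin m), w ≠ [] → Finite {x : X // wcomp g w x = x} ∧
      Nat.card {x : X // wcomp g w x = x} ≤ M ^ (w.length + 1) := by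
  obtain ⟨t, -, ht⟩ := isCompact_univ.elim_nhds_subcover
    (fun x : X => Metric.ball x (δ₀ / 2)) (fun x _ => Metric.ball_mem_nhds x (by positivity))
  have hc : ∀ x : X, ∃ c : t, dist x c < δ₀ / 2 := by
    intro x
    obtain ⟨c, hc, hx⟩ : ∃ c ∈ t, dist x c < δ₀ / 2 := by simpa using ht (Set.mem_univ x)
    exact ⟨⟨c, hc⟩, hx⟩
  choose c hc using hc
  refine ⟨Nat.card t, ?_, fun w hw => ?_⟩
  · have : Nonempty t := ⟨c (Classical.arbitrary X)⟩
    exact Nat.card_pos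
  let Φ : {x : X // wcomp g w x = x} → (Fin (w.length + 1) → t) :=
    fun x l => c (wcomp g (w.drop l) x.1)
  have hΦ : Function.Injective Φ := by
    intro x y hxy
    have hs : ∀ s, s <:+ w → dist (wcomp g s x.1) (wcomp g s y.1) ≤ δ₀ := by
      intro s hs
      have h1 := congrFun hxy ⟨w.length - s.length, by omega⟩
      simp only [Φ] at h1
      rw [← List.suffix_iff_eq_drop.1 hs] at h1
      have h2 := hc (wcomp g s x.1)
      have h3 := hc (wcomp g s y.1)
      rw [← h1] at h3
      have := dist_triangle_right (wcomp g s x.1) (wcomp g s y.1) (c (wcomp g s x.1))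
      linarith
    have h := expansive hlam0 hexp w x.1 y.1 hs
    rw [x.2, y.2] at h
    have hlt : lam ^ w.length < 1 := pow_lt_one₀ hlam0.le hlam1 (by simpa using hw)
    have h0 : dist x.1 y.1 = 0 := by
      nlinarith [dist_nonneg (x := x.1) (y := y.1)]
    exact Subtype.ext (dist_eq_zero.1 h0)
  refine ⟨Finite.of_injective Φ hΦ, ?_⟩
  have := Nat.card_le_card_of_injective Φ hΦ
  simpa using this

/-! ### Separated sets -/

/-- Shadowing the points of a separated set by fixed points of `g_{hw}` is injective. -/
lemma sep_card_le {m : ℕ} {X : Type*} [MetricSpace X] {g : Fin m → X → X} {p : ℕ} {ε : ℝ}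
    (hε : 0 < ε)
    (hspec : ∀ (k : ℕ) (x : ℕ → X) (w h : ℕ → List (Fin m)),
      (∀ j < k, p ≤ (h j).length) →
      ∃ y : X, wcomp g (precomp w h k) y = y ∧
        ∀ j < k, ∀ s, s <:+ w j →
          dist (wcomp g s (wcomp g (precomp w h j) y)) (wcomp g s (x j)) < ε / 2)
    (h w : List (Fin m)) (hp : p ≤ h.length) [Finite {x : X // wcomp g (h ++ w) x = x}]
    (F : Finset X) (hF : ∀ x ∈ F, ∀ y ∈ F, x ≠ y → ε < dynDist g w x y) :
    F.card ≤ Nat.card {x : X // wcomp g (h ++ w) x = x} := by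
  have hsh : ∀ x : X, ∃ y : {x : X // wcomp g (h ++ w) x = x},
      ∀ s, s <:+ w → dist (wcomp g s y.1) (wcomp g s x) < ε / 2 := by
    intro x
    obtain ⟨y, hy, hs⟩ := hspec 1 (fun _ => x) (fun _ => w) (fun _ => h) (fun _ _ => hp)
    exact ⟨⟨y, by simpa [precomp] using hy⟩, fun s h => hs 0 one_pos s h⟩
  choose σ hσ using hsh
  have hinj : Function.Injective fun x : F => σ x.1 := by
    intro x y hxy
    by_contra hne
    obtain ⟨s, hs, hlt⟩ := (lt_dynDist_iff g w x.1 y.1 hε.le).1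
      (hF x.1 x.2 y.1 y.2 fun h => hne (Subtype.ext h))
    have h1 := hσ x.1 s hs
    have h2 := hσ y.1 s hs
    simp only at hxy
    rw [← hxy] at h2
    have := dist_triangle_left (wcomp g s x.1) (wcomp g s y.1) (wcomp g s (σ x.1).1)
    linarith
  have := Nat.card_le_card_of_injective _ hinj
  simpa using this

/-- Given two points at distance greater than `3 ε`, a word of length `k p` contains `k`
disjoint gaps of length `p`; prescribing one of the two points before each gap yields `2 ^ k`
pairwise `ε`-separated points. -/
lemma exists_sep {m : ℕ} {X : Type*} [MetricSpace X] {g : Fin m → X → X} {p : ℕ} {ε : ℝ}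
    (hε : 0 < ε)
    (hspec : ∀ (k : ℕ) (x : ℕ → X) (w h : ℕ → List (Fin m)),
      (∀ j < k, p ≤ (h j).length) →
      ∃ y : X, wcomp g (precomp w h k) y = y ∧
        ∀ j < k, ∀ s, s <:+ w j →
          dist (wcomp g s (wcomp g (precomp w h j) y)) (wcomp g s (x j)) < ε)
    (a b : X) (hab : 3 * ε < dist a b) (k : ℕ) (v : List (Fin m)) (hv : v.length = k * p) :
    ∃ F : Finset X, (∀ x ∈ F, ∀ y ∈ F, x ≠ y → ε < dynDist g v x y) ∧ F.card = 2 ^ k := by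
  have hcut : ∀ (k : ℕ) (v : List (Fin m)), v.length = k * p →
      ∃ h : ℕ → List (Fin m), (∀ j < k, p ≤ (h j).length) ∧ precomp (fun _ => []) h k = v := by
    intro k
    induction k with
    | zero => intro v hv; exact ⟨fun _ => [], by simp, by simpa [precomp, eq_comm] using hv⟩
    | succ k ih =>
      intro v hv
      have hle : p ≤ v.length := by rw [hv]; exact Nat.le_mul_of_pos_left p (by omega)
      obtain ⟨h, hh, hpre⟩ := ih (v.drop p) (by
        rw [List.length_drop, hv, Nat.succ_mul]; omega)
      have hcongr : ∀ j ≤ k, precomp (fun _ => []) (Function.update h k (v.take p)) j =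
          precomp (fun _ => []) h j := by
        intro j
        induction j with
        | zero => intro _; rfl
        | succ j ihj =>
          intro hj
          simp only [precomp]
          rw [ihj (by omega), Function.update_of_ne (by omega)]
      refine ⟨Function.update h k (v.take p), ?_, ?_⟩
      · intro j hj
        rcases Nat.lt_succ_iff_lt_or_eq.1 hj with hj | rfl
        · rw [Function.update_of_ne (by omega)]; exact hh j hj
        · simp [hle]
      · simp only [precomp]
        rw [hcongr k le_rfl, hpre]
        simp
  obtain ⟨h, hh, hpre⟩ := hcut k v hv
  have hsh : ∀ c : Fin k → Bool, ∃ y : X, ∀ j : Fin k,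
      dist (wcomp g (precomp (fun _ => []) h j) y) (if c j then a else b) < ε := by
    intro c
    obtain ⟨y, -, hy⟩ := hspec k
      (fun j => if hj : j < k then (if c ⟨j, hj⟩ then a else b) else a) (fun _ => []) h hh
    refine ⟨y, fun j => ?_⟩
    have := hy j j.2 [] List.nil_suffix
    simpa [wcomp] using this
  choose σ hσ using hsh
  have hsep : ∀ c d, c ≠ d → ε < dynDist g v (σ c) (σ d) := by
    intro c d hcd
    obtain ⟨j, hj⟩ := Function.ne_iff.1 hcd
    refine (lt_dynDist_iff g v _ _ hε.le).2 ⟨precomp (fun _ => []) h j, ?_, ?_⟩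
    · have := suffix_precomp (fun _ => []) h j.2 (s := []) List.nil_suffix
      rwa [hpre] at this
    · have h1 := hσ c j
      have h2 := hσ d j
      have h3 : 3 * ε < dist (if c j then a else b) (if d j then a else b) := by
        cases hc : c j <;> cases hd : d j <;> simp_all [dist_comm b a]
      have h4 := dist_triangle4 (if c j then a else b)
        (wcomp g (precomp (fun _ => []) h j) (σ c))
        (wcomp g (precomp (fun _ => []) h j) (σ d)) (if d j then a else b)
      rw [dist_comm (if c j then a else b) (wcomp g (precomp (fun _ => []) h j) (σ c))] at h4
      linarith
  have hinj : Function.Injective σ := by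
    intro c d hcd
    by_contra hne
    have := hsep c d hne
    rw [hcd, lt_dynDist_iff g v _ _ hε.le] at this
    obtain ⟨s, -, hs⟩ := this
    rw [dist_self] at hs
    linarith
  refine ⟨Finset.univ.image σ, ?_, ?_⟩
  · intro x hx y hy hxy
    obtain ⟨c, -, rfl⟩ := Finset.mem_image.1 hx
    obtain ⟨d, -, rfl⟩ := Finset.mem_image.1 hy
    exact hsep c d fun h => hxy (by rw [h])
  · rw [Finset.card_image_of_injective _ hinj]
    simp

/-! ### Growth rates -/

/-- Comparison of exponential growth rates under a bounded shift of the index. The bounds on `A`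
and `B` rule out the junk values of real limits superior. -/
lemma limsup_growth_le {A B : ℕ → ℝ} {K : ℝ} {p : ℕ} (hK : 1 ≤ K) (hB : ∀ n, 1 ≤ B n)
    (hBA : ∀ n, B n ≤ A (p + n)) (hA : ∀ n, 0 < n → A n ≤ K ^ (n + 1)) :
    limsup (fun n : ℕ => Real.log (B n) / n) atTop ≤
        limsup (fun n : ℕ => Real.log (A n) / n) atTop ∧
      IsBoundedUnder (· ≤ ·) atTop (fun n : ℕ => Real.log (B n) / n) := by
  have hA1 : ∀ n, p ≤ n → 1 ≤ A n := by
    intro n hn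
    have := (hB (n - p)).trans (hBA (n - p))
    rwa [Nat.add_sub_cancel' hn] at this
  have hAbdd : IsBoundedUnder (· ≤ ·) atTop (fun n : ℕ => Real.log (A n) / n) := by
    refine isBoundedUnder_of_eventually_le (a := 2 * Real.log K) ?_
    filter_upwards [eventually_ge_atTop (p + 1)] with n hn
    have hn1 : (1 : ℝ) ≤ n := by exact_mod_cast (by omega : 1 ≤ n)
    have h1 : Real.log (A n) ≤ (n + 1 : ℕ) * Real.log K := by
      rw [← Real.log_pow]
      exact Real.log_le_log (by linarith [hA1 n (by omega)]) (hA n (by omega))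
    rw [div_le_iff₀ (by linarith)]
    push_cast at h1
    nlinarith [Real.log_nonneg hK]
  have hcmp : ∀ c, limsup (fun n : ℕ => Real.log (A n) / n) atTop < c →
      ∀ᶠ n : ℕ in atTop, Real.log (B n) / n ≤ c * (p / n + 1) := by
    intro c hc
    have h1 := eventually_lt_of_limsup_lt hc hAbdd
    have h2 : Tendsto (fun n => p + n) atTop atTop := tendsto_atTop_mono
      (fun n => Nat.le_add_left n p) tendsto_id
    filter_upwards [h2.eventually h1, eventually_gt_atTop 0] with n hn hn0
    have hn0' : (0 : ℝ) < n := by exact_mod_cast hn0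
    rw [div_lt_iff₀ (by positivity)] at hn
    have h3 : Real.log (B n) ≤ Real.log (A (p + n)) :=
      Real.log_le_log (by linarith [hB n]) (hBA n)
    rw [div_le_iff₀ hn0', mul_assoc, add_mul, div_mul_cancel₀ _ hn0'.ne', one_mul]
    push_cast at hn
    linarith
  have hlim : ∀ c : ℝ, Tendsto (fun n : ℕ => c * ((p : ℝ) / n + 1)) atTop (𝓝 c) := by
    intro c
    simpa using ((tendsto_const_div_atTop_nhds_zero_nat (p : ℝ)).add_const 1).const_mul c
  have hBlow : IsBoundedUnder (· ≥ ·) atTop (fun n : ℕ => Real.log (B n) / n) :=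
    isBoundedUnder_of_eventually_ge (a := 0) (Eventually.of_forall fun n =>
      div_nonneg (Real.log_nonneg (hB n)) (Nat.cast_nonneg n))
  refine ⟨le_of_forall_gt_imp_ge_of_dense fun c hc => ?_, ?_⟩
  · rw [← (hlim c).limsup_eq]
    exact limsup_le_limsup (hcmp c hc) hBlow.isCoboundedUnder_le (hlim c).isBoundedUnder_le
  · exact ((hlim _).isBoundedUnder_le).mono_le (hcmp _ (lt_add_one _))

/-- A semigroup generated by finitely many surjective, open,
distance-expanding maps of a compact metric space (with at least two points, and in which any
two points are joined by an `L`-Lipschitz path) satisfies: (a) the periodic strong orbital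
specification property; (b) density of the set of periodic points; and (c) positivity of the
averaged topological entropy, which moreover bounds from below the exponential mean growth
rate of periodic points. -/
theorem expanding_periodic_specification_dense_periodic_points_and_entropy_bound
    {X : Type*} [MetricSpace X] [CompactSpace X]
    (hX : ∃ x y : X, x ≠ y)
    (L : ℝ) (hL : 0 < L)
    (hpath : ∀ x y : X, ∃ γ : ℝ → X, LipschitzOnWith (Real.toNNReal L) γ (Set.Icc 0 1) ∧
      γ 0 = x ∧ γ 1 = y)
    {m : ℕ} (hm : 0 < m) (g : Fin m → X → X) (hg : ∀ i, Continuous (g i))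
    (hopen : ∀ i, IsOpenMap (g i)) (hsurj : ∀ i, Function.Surjective (g i))
    (δ₀ lam : ℝ) (hδ₀ : 0 < δ₀) (hlam0 : 0 < lam) (hlam1 : lam < 1)
    (hexp : ∀ i, ∀ x y : X, dist x y ≤ δ₀ → lam⁻¹ * dist x y ≤ dist (g i x) (g i y)) :
    (∀ ε : ℝ, 0 < ε → ∃ p : ℕ, ∀ (k : ℕ) (x : ℕ → X) (w h : ℕ → List (Fin m)),
      (∀ j < k, p ≤ (h j).length) →
      ∃ y : X, wcomp g (precomp w h k) y = y ∧
        ∀ j < k, ∀ s, s <:+ w j →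
          dist (wcomp g s (wcomp g (precomp w h j) y)) (wcomp g s (x j)) < ε) ∧
    Dense {x : X | ∃ w : List (Fin m), w ≠ [] ∧ wcomp g w x = x} ∧
    (0 < bufEntropy g Set.univ ∧
      bufEntropy g Set.univ ≤ limsup (fun n : ℕ => Real.log ((1 / (m : ℝ) ^ n) *
        ∑ f : Fin n → Fin m, (Nat.card {x : X // wcomp g (List.ofFn f) x = x} : ℝ)) / n)
        atTop) := by
  obtain ⟨a, b, hab⟩ := hX
  have : Nonempty X := ⟨a⟩
  have hm' : (0 : ℝ) < m := by exact_mod_cast hm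
  obtain ⟨ρ, hρ, hpull⟩ := exists_pull hg hopen hδ₀ hlam0 hexp
  obtain ⟨C, hfar⟩ := exists_far_pull hL hpath hlam0 hlam1 hρ hpull
  have hspec := periodic_spec hg hlam0 hlam1 hρ hpull hfar
  obtain ⟨M, hM, hfix⟩ := exists_card_fix_le hδ₀ hlam0 hlam1 hexp
  -- This bound also makes the suprema defining `maxSep` genuine ones.
  have hsep : ∀ ε : ℝ, 0 < ε → ∃ p : ℕ, ∀ h w : List (Fin m), h.length = p →
      ∀ F : Finset X, (∀ x ∈ F, ∀ y ∈ F, x ≠ y → ε < dynDist g w x y) →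
      F.card ≤ Nat.card {x : X // wcomp g (h ++ w) x = x} := by
    intro ε hε
    obtain ⟨p, hp, hs⟩ := hspec (ε / 2) (half_pos hε)
    refine ⟨p, fun h w hh F hF => ?_⟩
    have : Finite {x : X // wcomp g (h ++ w) x = x} :=
      (hfix (h ++ w) (by intro h0; rw [List.append_eq_nil_iff] at h0; simp [h0.1] at hh; omega)).1
    exact sep_card_le hε hs h w hh.ge F hF
  have hmax_ge : ∀ ε : ℝ, 0 < ε → ∀ (w : List (Fin m)) (F : Finset X),
      (∀ x ∈ F, ∀ y ∈ F, x ≠ y → ε < dynDist g w x y) →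
      F.card ≤ maxSep g w ε Set.univ := by
    intro ε hε w F hF
    obtain ⟨p, hp⟩ := hsep ε hε
    refine le_csSup ⟨Nat.card {x : X // wcomp g (List.replicate p ⟨0, hm⟩ ++ w) x = x}, ?_⟩
      ⟨F, Set.subset_univ _, hF, rfl⟩
    rintro k ⟨F', -, hF', rfl⟩
    exact hp _ w (by simp) F' hF'
  have hmax_le : ∀ ε : ℝ, 0 < ε → ∃ p : ℕ, ∀ h w : List (Fin m), h.length = p →
      maxSep g w ε Set.univ ≤ Nat.card {x : X // wcomp g (h ++ w) x = x} := by
    intro ε hε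
    obtain ⟨p, hp⟩ := hsep ε hε
    refine ⟨p, fun h w hh => csSup_le ⟨0, ∅, by simp⟩ ?_⟩
    rintro k ⟨F', -, hF', rfl⟩
    exact hp h w hh F' hF'
  -- Averages over the `m ^ n` words of length `n` inherit lower and upper bounds.
  have havg_ge : ∀ (n : ℕ) (φ : (Fin n → Fin m) → ℝ) (c : ℝ), (∀ f, c ≤ φ f) →
      c ≤ 1 / (m : ℝ) ^ n * ∑ f, φ f := by
    intro n φ c hφ
    have h1 : (m : ℝ) ^ n * c ≤ ∑ f, φ f := by
      have := Finset.card_nsmul_le_sum Finset.univ φ c (fun f _ => hφ f)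
      simpa using this
    rw [one_div, le_inv_mul_iff₀ (by positivity)]
    exact h1
  have havg_le : ∀ (n : ℕ) (φ : (Fin n → Fin m) → ℝ) (c : ℝ), (∀ f, φ f ≤ c) →
      1 / (m : ℝ) ^ n * ∑ f, φ f ≤ c := by
    intro n φ c hφ
    have h1 : ∑ f, φ f ≤ (m : ℝ) ^ n * c := by
      have := Finset.sum_le_card_nsmul Finset.univ φ c (fun f _ => hφ f)
      simpa using this
    rw [one_div, inv_mul_le_iff₀ (by positivity)]
    exact h1
  set A : ℕ → ℝ := fun n => (1 / (m : ℝ) ^ n) *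
    ∑ f : Fin n → Fin m, (Nat.card {x : X // wcomp g (List.ofFn f) x = x} : ℝ) with hAdef
  have hA : ∀ n, 0 < n → A n ≤ (M : ℝ) ^ (n + 1) := by
    intro n hn
    refine havg_le n _ _ fun f => ?_
    have hne : List.ofFn f ≠ [] := by
      rw [ne_eq, List.ofFn_eq_nil_iff]; omega
    have := (hfix _ hne).2
    rw [List.length_ofFn] at this
    exact_mod_cast this
  have hB1 : ∀ ε : ℝ, 0 < ε → ∀ n, 1 ≤ bufZ g n ε Set.univ := by
    intro ε hε n
    refine havg_ge n _ _ fun f => ?_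
    have := hmax_ge ε hε (List.ofFn f) {a} (by simp)
    rw [Finset.card_singleton] at this
    exact_mod_cast this
  have hBA : ∀ ε : ℝ, 0 < ε → ∃ p : ℕ, ∀ n, bufZ g n ε Set.univ ≤ A (p + n) := by
    intro ε hε
    obtain ⟨p, hp⟩ := hmax_le ε hε
    refine ⟨p, fun n => ?_⟩
    have h1 : ∑ f : Fin (p + n) → Fin m,
          (Nat.card {x : X // wcomp g (List.ofFn f) x = x} : ℝ) =
        ∑ u : Fin p → Fin m, ∑ f : Fin n → Fin m,
          (Nat.card {x : X // wcomp g (List.ofFn u ++ List.ofFn f) x = x} : ℝ) := by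
      rw [← (Fin.appendEquiv p n).sum_comp, Fintype.sum_prod_type]
      simp [Fin.appendEquiv, List.ofFn_fin_append]
    have h2 : A (p + n) = 1 / (m : ℝ) ^ p * ∑ u : Fin p → Fin m, (1 / (m : ℝ) ^ n *
        ∑ f : Fin n → Fin m,
          (Nat.card {x : X // wcomp g (List.ofFn u ++ List.ofFn f) x = x} : ℝ)) := by
      rw [hAdef]
      simp only
      rw [h1, ← Finset.mul_sum, ← mul_assoc, pow_add, one_div_mul_one_div]
    rw [h2]
    refine havg_ge p _ _ fun u => mul_le_mul_of_nonneg_left ?_ (by positivity)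
    refine Finset.sum_le_sum fun f _ => ?_
    exact_mod_cast hp (List.ofFn u) (List.ofFn f) (by simp)
  have hlim : ∀ ε : ℝ, 0 < ε →
      limsup (fun n : ℕ => Real.log (bufZ g n ε Set.univ) / n) atTop ≤
        limsup (fun n : ℕ => Real.log (A n) / n) atTop ∧
      IsBoundedUnder (· ≤ ·) atTop (fun n : ℕ => Real.log (bufZ g n ε Set.univ) / n) := by
    intro ε hε
    obtain ⟨p, hp⟩ := hBA ε hε
    exact limsup_growth_le (by exact_mod_cast hM) (hB1 ε hε) hp hA
  refine ⟨fun ε hε => ?_, ?_, ?_, ?_⟩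
  · obtain ⟨p, -, hp⟩ := hspec ε hε
    exact ⟨p, hp⟩
  · rw [Metric.dense_iff]
    intro x ε hε
    obtain ⟨p, hp, hs⟩ := hspec ε hε
    obtain ⟨y, hy, hyx⟩ := hs 1 (fun _ => x) (fun _ => [])
      (fun _ => List.replicate p ⟨0, hm⟩) (by simp)
    refine ⟨y, hyx 0 one_pos [] List.nil_suffix, _, ?_, hy⟩
    simp [precomp, hp.ne']
  · have hd : 0 < dist a b := dist_pos.2 hab
    set ε := dist a b / 4 with hεd
    have hε : 0 < ε := by positivity
    obtain ⟨p, hp, hs⟩ := hspec ε hε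
    have hpp : (0 : ℝ) < p := by exact_mod_cast hp
    have hlow : Real.log 2 / p ≤
        limsup (fun n : ℕ => Real.log (bufZ g n ε Set.univ) / n) atTop := by
      refine le_limsup_of_frequently_le ?_ (hlim ε hε).2
      rw [frequently_atTop]
      intro N
      refine ⟨(N + 1) * p, by nlinarith, ?_⟩
      have h1 : (2 : ℝ) ^ (N + 1) ≤ bufZ g ((N + 1) * p) ε Set.univ := by
        refine havg_ge _ _ _ fun f => ?_
        obtain ⟨F, hF, hc⟩ := exists_sep hε hs a b (by rw [hεd]; linarith) (N + 1)
          (List.ofFn f) (by simp)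
        have := hmax_ge ε hε _ F hF
        rw [hc] at this
        exact_mod_cast this
      have h2 := Real.log_le_log (by positivity) h1
      rw [Real.log_pow] at h2
      have hN : (0 : ℝ) < ((N + 1 : ℕ) : ℝ) := by positivity
      rw [Nat.cast_mul, div_le_div_iff₀ hpp (by positivity)]
      nlinarith
    refine lt_of_lt_of_le (div_pos (Real.log_pos one_lt_two) hpp) (hlow.trans ?_)
    exact le_ciSup (f := fun ε : {ε : ℝ // 0 < ε} =>
      limsup (fun n : ℕ => Real.log (bufZ g n ε.1 Set.univ) / n) atTop)
      ⟨_, by rintro _ ⟨ε, rfl⟩; exact (hlim ε.1 ε.2).1⟩ ⟨ε, hε⟩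
  · have : Nonempty {ε : ℝ // 0 < ε} := ⟨⟨1, one_pos⟩⟩
    exact ciSup_le fun ε => (hlim ε.1 ε.2).1
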